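/- arXiv:math/0203162 — 2 statements merged into one kernel-verified Lean document; each statement's English description precedes it below -/
import Mathlib

section
/- Let K ⊂ ℝ² be a bounded, symmetric (K = −K) convex body, defining the norm ‖x‖_K = inf{t > 0 : x ∈ tK}. Let S ⊂ ℝ² be well-distributed (every unit square contains a point of S). If the distance set Δ_K(S) = {‖x − y‖_K : x, y ∈ S} is separated (all pairwise gaps between distinct elements are at least some c > 0), then for any angles θ₁ < θ₂, the boundary ∂K intersected with the open cone {r e^{iθ} : θ₁ < θ < θ₂, r > 0} contains a nondegenerate line segment. -/
open Set

open Filter Metric Module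
open scoped Topology Finset

/-!
Suppose that an open set `U` meets the frontier of `K`, but that the part of the frontier inside `U`
contains no segment. Near a frontier point the frontier is then a graph over an interval, and as it
contains no chord the graph is strictly concave. Such an arc is not met in three points by a
homothetic copy of itself, because a strictly concave function has no two chords of equal slope one
of which is shifted against the other.

On the other hand, fix two points `s ≠ s'` of `S` and take many points of `S` at distance about `R`
from the origin, in directions of the arc. Their distances to `s` lie in an interval whose length is
independent of `R`, so by separation only boundedly many distances occur, and likewise for `s'`. By
the pigeonhole principle three of the points have a common distance `d` to `s` and a common distance
`d'` to `s'`. They lie on the homothetic arcs of centres `s`, `s'` and radii `d`, `d'`, which is a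
contradiction.
-/

/-- A set `T` is homothety-rigid if every homothetic copy `l • T + w` with `l > 0` and `w ≠ 0` meets
`T` in at most two points. -/
def IsHomothetyRigid {E : Type*} [AddCommGroup E] [Module ℝ E] (T : Set E) : Prop :=
  ∀ ⦃l : ℝ⦄, 0 < l → ∀ ⦃w : E⦄, w ≠ 0 → ∀ F : Finset E, (∀ x ∈ F, x ∈ T ∧ l • x + w ∈ T) → #F ≤ 2

/-- The set of `K`-distances between the points of `S`, written `Δ_K(S)` in the paper; the
`K`-distance is the gauge of the difference, which need not be symmetric if `K` is not. -/
def gaugeDistSet {E : Type*} [AddCommGroup E] [Module ℝ E] (K S : Set E) : Set ℝ :=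
  image2 (fun x y => gauge K (x - y)) S S

lemma pairwise_gaugeDistSet_iff {E : Type*} [AddCommGroup E] [Module ℝ E] {K S : Set E}
    {r : ℝ → ℝ → Prop} : (gaugeDistSet K S).Pairwise r ↔
      ∀ x ∈ S, ∀ y ∈ S, ∀ x' ∈ S, ∀ y' ∈ S, gauge K (x - y) ≠ gauge K (x' - y') →
        r (gauge K (x - y)) (gauge K (x' - y')) := by
  simp only [Set.Pairwise, gaugeDistSet, forall_mem_image2]

lemma exists_lt_lt_of_two_lt_card {α : Type*} [LinearOrder α] {F : Finset α} (hF : 2 < #F) :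
    ∃ a ∈ F, ∃ b ∈ F, ∃ c ∈ F, a < b ∧ b < c := by
  let e : Fin 3 ↪o α := F.orderEmbOfCardLe hF
  have he (i : Fin 3) : e i ∈ F := F.orderEmbOfCardLe_mem hF i
  exact ⟨e 0, he 0, e 1, he 1, e 2, he 2, e.strictMono (by decide), e.strictMono (by decide)⟩

section StrictConcave

variable {𝕜 : Type*} [Field 𝕜] [LinearOrder 𝕜] [IsStrictOrderedRing 𝕜] {s : Set 𝕜} {f : 𝕜 → 𝕜}
  {a b c a' b' c' : 𝕜}

lemma slope_lt_slope_of_strictConcaveOn_left (hf : StrictConcaveOn 𝕜 s f) (ha : a ∈ s) (hb : b ∈ s)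
    (hb' : b' ∈ s) (hab : a < b) (hbb' : b < b') : slope f a b' < slope f a b := by
  simpa only [slope_def_field] using
    hf.secant_strict_mono ha hb hb' hab.ne' (hab.trans hbb').ne' hbb'

lemma slope_lt_slope_of_strictConcaveOn_right (hf : StrictConcaveOn 𝕜 s f) (ha : a ∈ s)
    (ha' : a' ∈ s) (hb : b ∈ s) (haa' : a < a') (hab : a' < b) : slope f a' b < slope f a b := by
  simpa only [slope_comm f _ b, slope_def_field] using
    hf.secant_strict_mono hb ha ha' (haa'.trans hab).ne hab.ne haa'

lemma eq_and_eq_of_slope_eq (hf : StrictConcaveOn 𝕜 s f) (ha : a ∈ s) (hb : b ∈ s) (ha' : a' ∈ s)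
    (hb' : b' ∈ s) (hab : a < b) (hab' : a' < b') (haa' : a ≤ a') (hbb' : b ≤ b')
    (hslope : slope f a b = slope f a' b') : a = a' ∧ b = b' := by
  have hleft : slope f a' b' ≤ slope f a b' := by
    rcases haa'.eq_or_lt with rfl | h
    · rfl
    · exact (slope_lt_slope_of_strictConcaveOn_right hf ha ha' hb' h hab').le
  have hright : slope f a b' ≤ slope f a b := by
    rcases hbb'.eq_or_lt with rfl | h
    · rfl
    · exact (slope_lt_slope_of_strictConcaveOn_left hf ha hb hb' hab h).le
  refine ⟨haa'.eq_of_not_lt fun h => ?_, hbb'.eq_of_not_lt fun h => ?_⟩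
  · exact (hslope ▸ slope_lt_slope_of_strictConcaveOn_right hf ha ha' hb' h hab').not_ge hright
  · exact (hslope ▸ slope_lt_slope_of_strictConcaveOn_left hf ha hb hb' hab h).not_ge hleft

/- Chords of equal slope are never shifted against each other. As `[b', c']` is at least as long as
`[b, c]`, this gives `b' ≤ b`; then `[a', b']` would be a shift of `[a, b]` to the left. -/
lemma eq_and_eq_of_slope_eq_of_sub_le (hf : StrictConcaveOn 𝕜 s f)
    (ha : a ∈ s) (hb : b ∈ s) (hc : c ∈ s) (ha' : a' ∈ s) (hb' : b' ∈ s) (hc' : c' ∈ s)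
    (hab : a < b) (hbc : b < c) (hab_le : b - a ≤ b' - a') (hbc_le : c - b ≤ c' - b')
    (hslope_ab : slope f a b = slope f a' b') (hslope_bc : slope f b c = slope f b' c') :
    a = a' ∧ b = b' := by
  have hab' : a' < b' := by linarith
  have hbc' : b' < c' := by linarith
  have hb'b : b' ≤ b := by
    by_contra! h
    exact h.ne (eq_and_eq_of_slope_eq hf hb hc hb' hc' hbc hbc' h.le (by linarith) hslope_bc).1
  have haa' : a' ≤ a := by linarith
  obtain ⟨ha'a, hb'b⟩ :=
    eq_and_eq_of_slope_eq hf ha' hb' ha hb hab' hab haa' hb'b hslope_ab.symm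
  exact ⟨ha'a.symm, hb'b.symm⟩

lemma eq_zero_of_homothety_graph {l τ ω : 𝕜} (hf : StrictConcaveOn 𝕜 s f) (hl : 0 < l)
    {F : Finset 𝕜} (hF : 2 < #F)
    (hmem : ∀ y ∈ F, y ∈ s ∧ l * y + τ ∈ s ∧ f (l * y + τ) = l * f y + ω) : τ = 0 ∧ ω = 0 := by
  obtain ⟨a, ha, b, hb, c, hc, hab, hbc⟩ := exists_lt_lt_of_two_lt_card hF
  obtain ⟨has, has', hfa⟩ := hmem a ha
  obtain ⟨hbs, hbs', hfb⟩ := hmem b hb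
  obtain ⟨hcs, hcs', hfc⟩ := hmem c hc
  have slope_eq {x y : 𝕜} (hx : f (l * x + τ) = l * f x + ω) (hy : f (l * y + τ) = l * f y + ω) :
      slope f x y = slope f (l * x + τ) (l * y + τ) := by
    rw [slope_def_field, slope_def_field, hx, hy, add_sub_add_right_eq_sub,
      add_sub_add_right_eq_sub, ← mul_sub, ← mul_sub, mul_div_mul_left _ _ hl.ne']
  have hfix : a = l * a + τ ∧ b = l * b + τ := by
    rcases le_total 1 l with h | h
    · exact eq_and_eq_of_slope_eq_of_sub_le hf has hbs hcs has' hbs' hcs' hab hbc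
        (by nlinarith) (by nlinarith) (slope_eq hfa hfb) (slope_eq hfb hfc)
    · have := eq_and_eq_of_slope_eq_of_sub_le hf has' hbs' hcs' has hbs hcs (by gcongr)
        (by gcongr) (by nlinarith) (by nlinarith) (slope_eq hfa hfb).symm (slope_eq hfb hfc).symm
      exact ⟨this.1.symm, this.2.symm⟩
  have hl1 : l = 1 := mul_right_cancel₀ (sub_pos.2 hab).ne' (by linear_combination hfix.1 - hfix.2)
  subst hl1
  have hτ : τ = 0 := by linear_combination -hfix.1
  subst hτ
  rw [one_mul, add_zero, one_mul] at hfa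
  exact ⟨rfl, (left_eq_add.1 hfa)⟩

end StrictConcave

lemma isHomothetyRigid_of_subset_graph {E : Type*} [AddCommGroup E] [Module ℝ E]
    (e : E ≃ₗ[ℝ] ℝ × ℝ) {s : Set ℝ} {f : ℝ → ℝ} (hf : StrictConcaveOn ℝ s f) {T : Set E}
    (hT : ∀ z ∈ T, (e z).2 ∈ s ∧ (e z).1 = f (e z).2) : IsHomothetyRigid T := by
  intro l hl w hw F hF
  by_contra! hcard
  have hinj : InjOn (fun z => (e z).2) (F : Set E) := fun z hz z' hz' (h : (e z).2 = (e z').2) =>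
    e.injective <| Prod.ext
      (by rw [(hT z (hF z hz).1).2, (hT z' (hF z' hz').1).2, h]) h
  rw [← Finset.card_image_of_injOn hinj] at hcard
  have hw0 : (e w).2 = 0 ∧ (e w).1 = 0 := by
    refine eq_zero_of_homothety_graph hf hl hcard (Finset.forall_mem_image.2 fun z hz => ?_)
    obtain ⟨hz, hz'⟩ := hF z hz
    have h := hT _ hz'
    simp only [map_add, map_smul, Prod.fst_add, Prod.snd_add, Prod.smul_fst, Prod.smul_snd,
      smul_eq_mul] at h
    exact ⟨(hT z hz).1, h.1, by rw [← h.2, (hT z hz).2]⟩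
  exact hw (e.map_eq_zero_iff.1 (Prod.ext hw0.2 hw0.1))

lemma ne_zero_of_mem_frontier {X : Type*} [TopologicalSpace X] [Zero X] {K : Set X} {p : X}
    (h0 : K ∈ 𝓝 0) (hp : p ∈ frontier K) : p ≠ 0 := by
  rintro rfl
  exact hp.2 (mem_interior_iff_mem_nhds.2 h0)

section ConvexBody

variable {E : Type*} [AddCommGroup E] [Module ℝ E] [TopologicalSpace E] [IsTopologicalAddGroup E]
  [ContinuousSMul ℝ E] {K V : Set E} {p q u v : E}

lemma gauge_smul_of_mem_frontier {r : ℝ} (hK : Convex ℝ K) (h0 : K ∈ 𝓝 0) (hp : p ∈ frontier K)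
    (hr : 0 ≤ r) : gauge K (r • p) = r := by
  rw [gauge_smul_of_nonneg hr, (gauge_eq_one_iff_mem_frontier hK h0).2 hp, smul_eq_mul, mul_one]

lemma inv_gauge_smul_mem_frontier (hK : Convex ℝ K) (h0 : K ∈ 𝓝 0) (hp : 0 < gauge K p) :
    (gauge K p)⁻¹ • p ∈ frontier K := by
  rw [← gauge_eq_one_iff_mem_frontier hK h0, gauge_smul_of_nonneg (inv_nonneg.2 hp.le), smul_eq_mul,
    inv_mul_cancel₀ hp.ne']

lemma segment_subset_frontier {a b m : E} (hK : Convex ℝ K) (ha : a ∈ closure K)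
    (hb : b ∈ closure K) (hm : m ∈ openSegment ℝ a b) (hmK : m ∉ interior K) :
    segment ℝ a b ⊆ frontier K := by
  intro z hz
  refine ⟨hK.closure.segment_subset ha hb hz, fun hzK => hmK ?_⟩
  rw [segment_eq_image_lineMap] at hz
  rcases openSegment_subset_union a b (image_subset_range _ _ hz) hm with rfl | hm | hm
  · exact hzK
  · exact hK.openSegment_closure_interior_subset_interior ha hzK hm
  · exact hK.openSegment_interior_closure_subset_interior hzK hb hm

lemma smul_add_mem_interior_of_lt {s t : ℝ} (hK : Convex ℝ K) (hq : q ∈ interior K)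
    (ht : t • u + q ∈ closure K) (hs : 0 < s) (hst : s < t) : s • u + q ∈ interior K := by
  have ht0 : 0 < t := hs.trans hst
  refine hK.openSegment_interior_closure_subset_interior hq ht
    ⟨1 - s / t, s / t, ?_, by positivity, by ring, ?_⟩
  · rwa [sub_pos, div_lt_one ht0]
  · rw [smul_add, smul_smul, div_mul_cancel₀ _ ht0.ne']
    module

lemma eq_of_smul_add_mem_frontier {s t : ℝ} (hK : Convex ℝ K) (hq : q ∈ interior K) (hs : 0 < s)
    (ht : 0 < t) (hsK : s • u + q ∈ frontier K) (htK : t • u + q ∈ frontier K) : s = t := by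
  rcases lt_trichotomy s t with h | h | h
  · exact absurd (smul_add_mem_interior_of_lt hK hq htK.1 hs h) hsK.2
  · exact h
  · exact absurd (smul_add_mem_interior_of_lt hK hq hsK.1 ht h) htK.2

lemma strictConcaveOn_of_graph_subset_frontier {s : Set ℝ} {f : ℝ → ℝ} (hK : Convex ℝ K)
    (hs : Convex ℝ s) (hv : ∀ y ∈ s, y • v ∈ interior K) (hf0 : ∀ y ∈ s, 0 < f y)
    (hf : ∀ y ∈ s, f y • u + y • v ∈ frontier K)
    (hseg : ∀ x ∈ s, ∀ y ∈ s, x ≠ y →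
      ¬ segment ℝ (f x • u + x • v) (f y • u + y • v) ⊆ frontier K) :
    StrictConcaveOn ℝ s f := by
  refine ⟨hs, fun x hx y hy hxy a b ha hb hab => ?_⟩
  by_contra! hle
  have hm := hs hx hy ha.le hb.le hab
  refine hseg x hx y hy hxy <|
    segment_subset_frontier hK (hf x hx).1 (hf y hy).1 ⟨a, b, ha, hb, hab, rfl⟩ ?_
  have hchord : a • (f x • u + x • v) + b • (f y • u + y • v) =
      (a • f x + b • f y) • u + (a • x + b • y) • v := by module
  rw [hchord]
  intro hint
  rcases hle.eq_or_lt with h | h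
  · exact (hf _ hm).2 (h ▸ hint)
  · exact (hf _ hm).2 <|
      smul_add_mem_interior_of_lt hK (hv _ hm) (interior_subset_closure hint) (hf0 _ hm) h

/- The chord from `(1 - ε) • p` to `(1 + ε) • p` crosses the frontier, and it still does after a
small translation along `v`. -/
lemma eventually_exists_smul_add_mem_frontier (hK : Convex ℝ K) (h0 : K ∈ 𝓝 0)
    (hp : p ∈ frontier K) (hV : V ∈ 𝓝 p) (v : E) :
    ∀ᶠ y : ℝ in 𝓝 0, ∃ x : ℝ, 0 < x ∧ x • p + y • v ∈ frontier K ∩ V := by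
  have hgauge : Continuous fun z : ℝ × ℝ => gauge K (z.1 • p + z.2 • v) :=
    (continuous_gauge hK h0).comp (by fun_prop)
  have hnear : ∀ᶠ z : ℝ × ℝ in 𝓝 1 ×ˢ 𝓝 0, 0 < z.1 ∧ z.1 • p + z.2 • v ∈ V := by
    rw [← nhds_prod_eq]
    refine (continuous_fst.tendsto _ |>.eventually_const_lt one_pos).and ?_
    have hcont : Continuous fun z : ℝ × ℝ => z.1 • p + z.2 • v := by fun_prop
    exact hcont.continuousAt.eventually_mem (by simpa using hV)
  obtain ⟨P, hP, Q, hQ, hPQ⟩ := eventually_prod_iff.1 hnear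
  obtain ⟨ε, hε, hεP⟩ := nhds_basis_closedBall.eventually_iff.1 hP
  rw [Real.closedBall_eq_Icc] at hεP
  have hendpoint (x : ℝ) : Tendsto (fun y : ℝ => gauge K (x • p + y • v)) (𝓝 0)
      (𝓝 (gauge K (x • p))) := by
    simpa [Function.comp_def] using (hgauge.comp (.prodMk_right x)).tendsto 0
  have hε1 : 0 < 1 - ε := (hPQ (hεP (left_mem_Icc.2 (by linarith))) hQ.self_of_nhds).1
  have hinner : gauge K ((1 - ε) • p) < 1 := by
    rwa [gauge_smul_of_mem_frontier hK h0 hp hε1.le, sub_lt_self_iff]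
  have houter : 1 < gauge K ((1 + ε) • p) := by
    rwa [gauge_smul_of_mem_frontier hK h0 hp (by positivity), lt_add_iff_pos_right]
  filter_upwards [hQ, (hendpoint _).eventually_lt_const hinner,
    (hendpoint _).eventually_const_lt houter] with y hy hlt hgt
  obtain ⟨x, hx, hx1⟩ := intermediate_value_Icc (by linarith)
    (hgauge.comp (.prodMk_left y)).continuousOn ⟨hlt.le, hgt.le⟩
  obtain ⟨hx0, hxV⟩ := hPQ (hεP hx) hy
  exact ⟨x, hx0, (gauge_eq_one_iff_mem_frontier hK h0).1 hx1, hxV⟩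

end ConvexBody

section Plane

variable {E : Type*} [NormedAddCommGroup E] [NormedSpace ℝ E] {K U V : Set E} {p : E}

lemma exists_continuousLinearEquiv_prod (hE : finrank ℝ E = 2) (hp : p ≠ 0) :
    ∃ e : E ≃L[ℝ] ℝ × ℝ, e p = (1, 0) := by
  have : FiniteDimensional ℝ E := .of_finrank_eq_succ hE
  let e : E ≃L[ℝ] ℝ × ℝ := .ofFinrankEq (by simp [hE])
  obtain ⟨A, hA⟩ := SeparatingDual.exists_continuousLinearEquiv_apply_eq (R := ℝ) (x := e p)
    (y := ((1 : ℝ), (0 : ℝ))) (by simpa using hp) (by simp)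
  exact ⟨e.trans A, hA⟩

lemma apply_smul_add_smul_symm {e : E ≃L[ℝ] ℝ × ℝ} (hep : e p = (1, 0)) (x y : ℝ) :
    e (x • p + y • e.symm (0, 1)) = (x, y) := by
  simp [hep]

lemma fst_smul_add_snd_smul_symm {e : E ≃L[ℝ] ℝ × ℝ} (hep : e p = (1, 0)) (z : E) :
    (e z).1 • p + (e z).2 • e.symm (0, 1) = z :=
  e.injective (apply_smul_add_smul_symm hep _ _)

lemma infinite_frontier_inter (hE : finrank ℝ E = 2) (hK : Convex ℝ K) (h0 : K ∈ 𝓝 0)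
    (hp : p ∈ frontier K) (hV : V ∈ 𝓝 p) : (frontier K ∩ V).Infinite := by
  obtain ⟨e, hep⟩ := exists_continuousLinearEquiv_prod hE (ne_zero_of_mem_frontier h0 hp)
  refine Infinite.of_image (fun z => (e z).2) (infinite_of_mem_nhds (0 : ℝ) ?_)
  filter_upwards [eventually_exists_smul_add_mem_frontier hK h0 hp hV (e.symm (0, 1))]
    with y ⟨x, _, hxy⟩
  exact ⟨_, hxy, congrArg Prod.snd (apply_smul_add_smul_symm hep x y)⟩

theorem exists_isHomothetyRigid_frontier_inter (hE : finrank ℝ E = 2) (hK : Convex ℝ K)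
    (h0 : K ∈ 𝓝 0) (hp : p ∈ frontier K) (hU : U ∈ 𝓝 p)
    (hseg : ∀ A B, segment ℝ A B ⊆ frontier K ∩ U → A = B) :
    ∃ V, IsOpen V ∧ p ∈ V ∧ IsHomothetyRigid (frontier K ∩ V) := by
  obtain ⟨e, hep⟩ := exists_continuousLinearEquiv_prod hE (ne_zero_of_mem_frontier h0 hp)
  set v := e.symm (0, 1)
  obtain ⟨r, hr, hrU⟩ := Metric.mem_nhds_iff.1 hU
  have hinterior : ∀ᶠ y : ℝ in 𝓝 0, y • v ∈ interior K :=
    (show Continuous fun y : ℝ => y • v by fun_prop).continuousAt.eventually_mem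
      (by simpa using h0)
  obtain ⟨δ, hδ, hgraph⟩ := Metric.eventually_nhds_iff_ball.1 <|
    hinterior.and (eventually_exists_smul_add_mem_frontier hK h0 hp (ball_mem_nhds p hr) v)
  choose! f hf0 hf using fun y hy => (hgraph y hy).2
  have hconcave : StrictConcaveOn ℝ (ball 0 δ) f := by
    refine strictConcaveOn_of_graph_subset_frontier hK (convex_ball 0 δ)
      (fun y hy => (hgraph y hy).1) hf0 (fun y hy => (hf y hy).1) fun x hx y hy hxy hsub => hxy ?_
    have hball := (convex_ball p r).segment_subset (hf x hx).2 (hf y hy).2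
    have h := congrArg e (hseg _ _ (subset_inter hsub (hball.trans hrU)))
    rw [apply_smul_add_smul_symm hep, apply_smul_add_smul_symm hep] at h
    exact congrArg Prod.snd h
  refine ⟨e ⁻¹' (Ioi 0 ×ˢ ball 0 δ), (isOpen_Ioi.prod isOpen_ball).preimage e.continuous,
    by simp [hep, hδ], isHomothetyRigid_of_subset_graph e.toLinearEquiv hconcave ?_⟩
  rintro z ⟨hzK, hz0, hzδ⟩
  rw [← fst_smul_add_snd_smul_symm hep z] at hzK
  exact ⟨hzδ, eq_of_smul_add_mem_frontier hK (hgraph _ hzδ).1 hz0 (hf0 _ hzδ) hzK (hf _ hzδ).1⟩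

end Plane

lemma exists_card_le_of_pairwise_le_abs_sub {c : ℝ} (hc : 0 < c) (ℓ : ℝ) :
    ∃ n, ∀ (a : ℝ) (D : Finset ℝ), (D : Set ℝ).Pairwise (fun x y => c ≤ |x - y|) →
      (D : Set ℝ) ⊆ Icc a (a + ℓ) → #D ≤ n := by
  refine ⟨#(Finset.Icc 0 ⌊ℓ / c⌋), fun a D hsep hD =>
    Finset.card_le_card_of_injOn (fun x => ⌊(x - a) / c⌋) (fun x hx => ?_) fun x hx y hy hxy => ?_⟩
  · obtain ⟨hax, hxa⟩ := hD hx
    rw [Finset.mem_coe, Finset.mem_Icc]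
    exact ⟨Int.floor_nonneg.2 (div_nonneg (sub_nonneg.2 hax) hc.le),
      Int.floor_le_floor (by gcongr; linarith)⟩
  · by_contra! hne
    have hlt := Int.abs_sub_lt_one_of_floor_eq_floor hxy
    rw [← sub_div, sub_sub_sub_cancel_right, abs_div, abs_of_pos hc, div_lt_one hc] at hlt
    exact hlt.not_ge (hsep hx hy hne)

section Pigeonhole

variable {E : Type*} [NormedAddCommGroup E] [NormedSpace ℝ E] {K S V : Set E}

lemma eventually_pairwise_lt_dist_smul {F : Set E} (hF : F.Finite) (b : ℝ) :
    ∀ᶠ R : ℝ in atTop, F.Pairwise fun z z' => b < dist (R • z) (R • z') := by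
  have hpair (z z' : E) (hne : z ≠ z') : ∀ᶠ R : ℝ in atTop, b < dist (R • z) (R • z') := by
    filter_upwards [eventually_ge_atTop 0, eventually_gt_atTop (b / dist z z')] with R hR hbR
    rwa [dist_smul₀, Real.norm_of_nonneg hR, ← div_lt_iff₀ (dist_pos.2 hne)]
  simp only [Set.Pairwise, hF.eventually_all, eventually_imp_distrib_left]
  exact fun z _ z' _ => hpair z z'

/- The radial projection `x ↦ (gauge K x)⁻¹ • x` onto the frontier is invariant under dilations, so
that on the ball around `R • z` it is as close to `z` as it is on a ball of radius `b / R` around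
`z`. -/
lemma eventually_inv_gauge_smul_mem {z : E} (hK : Convex ℝ K) (h0 : K ∈ 𝓝 0)
    (hz : z ∈ frontier K) (hV : V ∈ 𝓝 z) (b : ℝ) :
    ∀ᶠ R : ℝ in atTop, ∀ x ∈ closedBall (R • z) b,
      0 < gauge K x ∧ (gauge K x)⁻¹ • x ∈ frontier K ∩ V := by
  have hz1 : gauge K z = 1 := (gauge_eq_one_iff_mem_frontier hK h0).2 hz
  have hgauge : ContinuousAt (gauge K) z := (continuous_gauge hK h0).continuousAt
  have hproj : ContinuousAt (fun u => (gauge K u)⁻¹ • u) z :=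
    (hgauge.inv₀ (by simp [hz1])).smul continuousAt_id
  have hnear : ∀ᶠ u in 𝓝 z, 0 < gauge K u ∧ (gauge K u)⁻¹ • u ∈ V :=
    (hgauge.eventually_const_lt (by simp [hz1])).and (hproj.eventually_mem (by simpa [hz1]))
  obtain ⟨ε, hε, hball⟩ := Metric.eventually_nhds_iff_ball.1 hnear
  filter_upwards [eventually_gt_atTop 0, eventually_gt_atTop (b / ε)] with R hR hbR x hx
  have hdist : dist (R⁻¹ • x) z < ε := by
    rw [← inv_smul_smul₀ hR.ne' z, dist_smul₀, norm_inv, Real.norm_of_nonneg hR.le,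
      inv_mul_lt_iff₀ hR]
    exact (mem_closedBall.1 hx).trans_lt ((div_lt_iff₀ hε).1 hbR)
  obtain ⟨hpos, hmem⟩ := hball _ hdist
  rw [gauge_smul_of_nonneg (inv_nonneg.2 hR.le), smul_eq_mul] at hpos hmem
  have hx0 : 0 < gauge K x := pos_of_mul_pos_right hpos (inv_nonneg.2 hR.le)
  rw [mul_inv, inv_inv, smul_smul, mul_right_comm, mul_inv_cancel₀ hR.ne', one_mul] at hmem
  exact ⟨hx0, inv_gauge_smul_mem_frontier hK h0 hx0, hmem⟩

lemma exists_finset_gauge_sub_mem_Icc {b : ℝ} (hK : Convex ℝ K) (h0 : K ∈ 𝓝 0)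
    (hS : ∀ z, ∃ s ∈ S, dist z s ≤ b) (hV : IsOpen V) (hinf : (frontier K ∩ V).Infinite) (r : ℝ) :
    ∃ ℓ, ∀ M : ℕ, ∃ a, ∃ X : Finset E, (X : Set E) ⊆ S ∧ #X = M ∧
      ∀ x ∈ X, ∀ s ∈ closedBall (0 : E) r, gauge K (x - s) ∈ Icc a (a + ℓ) ∧
        0 < gauge K (x - s) ∧ (gauge K (x - s))⁻¹ • (x - s) ∈ frontier K ∩ V := by
  classical
  obtain ⟨C, hC⟩ := hK.lipschitz_gauge h0
  choose P hPS hP using hS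
  refine ⟨2 * (C * (b + r)), fun M => ?_⟩
  obtain ⟨F, hF, hFM⟩ := hinf.exists_subset_card_eq M
  obtain ⟨R, hR, hproj, hpair⟩ := (eventually_ge_atTop 0 |>.and <|
    ((Finset.eventually_all F).2 fun z hz =>
      eventually_inv_gauge_smul_mem hK h0 (hF hz).1 (hV.mem_nhds (hF hz).2) (b + r)).and <|
    eventually_pairwise_lt_dist_smul F.finite_toSet (b + b)).exists
  have hinj : InjOn (fun z => P (R • z)) F := fun z hz z' hz' (h : P (R • z) = P (R • z')) => by
    refine hpair.eq hz hz' (not_lt.2 ?_)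
    calc dist (R • z) (R • z') ≤ dist (R • z) (P (R • z)) + dist (R • z') (P (R • z)) :=
          dist_triangle_right _ _ _
      _ ≤ b + b := add_le_add (hP _) (h ▸ hP _)
  refine ⟨R - C * (b + r), F.image fun z => P (R • z), ?_, ?_, ?_⟩
  · rw [Finset.coe_image]
    exact image_subset_iff.2 fun z _ => hPS _
  · rw [Finset.card_image_of_injOn hinj, hFM]
  rw [Finset.forall_mem_image]
  intro z hz s hs
  have hdist : dist (P (R • z) - s) (R • z) ≤ b + r :=
    calc dist (P (R • z) - s) (R • z) = dist (P (R • z) - s) (R • z - 0) := by rw [sub_zero]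
      _ ≤ dist (P (R • z)) (R • z) + dist s 0 := dist_sub_sub_le _ _ _ _
      _ ≤ b + r := add_le_add ((dist_comm _ _).trans_le (hP _)) hs
  have hgauge : |gauge K (P (R • z) - s) - R| ≤ C * (b + r) :=
    calc |gauge K (P (R • z) - s) - R|
        = dist (gauge K (P (R • z) - s)) (gauge K (R • z)) := by
          rw [gauge_smul_of_mem_frontier hK h0 (hF hz).1 hR, Real.dist_eq]
      _ ≤ C * dist (P (R • z) - s) (R • z) := hC.dist_le_mul _ _
      _ ≤ C * (b + r) := by gcongr
  obtain ⟨hlower, hupper⟩ := abs_le.1 hgauge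
  exact ⟨⟨by linarith, by linarith⟩, hproj z hz _ hdist⟩

lemma exists_two_lt_card_inv_smul_sub_mem_frontier_inter {b c : ℝ} (hK : Convex ℝ K) (h0 : K ∈ 𝓝 0)
    (hS : ∀ z, ∃ s ∈ S, dist z s ≤ b) (hc : 0 < c)
    (hsep : (gaugeDistSet K S).Pairwise fun d d' => c ≤ |d - d'|)
    (hV : IsOpen V) (hinf : (frontier K ∩ V).Infinite) {s s' : E} (hs : s ∈ S) (hs' : s' ∈ S) :
    ∃ d > (0 : ℝ), ∃ d' > (0 : ℝ), ∃ X : Finset E, 2 < #X ∧ ∀ x ∈ X,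
      d⁻¹ • (x - s) ∈ frontier K ∩ V ∧ d'⁻¹ • (x - s') ∈ frontier K ∩ V := by
  classical
  obtain ⟨ℓ, hℓ⟩ := exists_finset_gauge_sub_mem_Icc hK h0 hS hV hinf (max ‖s‖ ‖s'‖)
  have hball : s ∈ closedBall 0 (max ‖s‖ ‖s'‖) := mem_closedBall_zero_iff.2 (le_max_left _ _)
  have hball' : s' ∈ closedBall 0 (max ‖s‖ ‖s'‖) := mem_closedBall_zero_iff.2 (le_max_right _ _)
  obtain ⟨n, hn⟩ := exists_card_le_of_pairwise_le_abs_sub hc ℓ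
  obtain ⟨a, X, hXS, hXcard, hX⟩ := hℓ (n * n * 2 + 1)
  have hcard {t : E} (ht : t ∈ S) (htball : t ∈ closedBall 0 (max ‖s‖ ‖s'‖)) :
      #(X.image fun x => gauge K (x - t)) ≤ n := by
    refine hn a _ (hsep.mono ?_) ?_ <;> rw [Finset.coe_image, image_subset_iff]
    · exact fun x hx => mem_image2_of_mem (hXS hx) ht
    · exact fun x hx => (hX x hx t htball).1
  have hmaps (x : E) (hx : x ∈ X) : (gauge K (x - s), gauge K (x - s')) ∈
      (X.image fun x => gauge K (x - s)) ×ˢ (X.image fun x => gauge K (x - s')) :=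
    Finset.mk_mem_product (Finset.mem_image_of_mem _ hx) (Finset.mem_image_of_mem _ hx)
  have hlt : #((X.image fun x => gauge K (x - s)) ×ˢ (X.image fun x => gauge K (x - s'))) * 2 <
      #X := by
    rw [Finset.card_product, hXcard]
    exact Nat.lt_succ_of_le (by gcongr; exacts [hcard hs hball, hcard hs' hball'])
  obtain ⟨⟨d, d'⟩, -, hfiber⟩ := Finset.exists_lt_card_fiber_of_mul_lt_card_of_maps_to hmaps hlt
  have hmem {x : E} (hx : x ∈ X.filter fun x => (gauge K (x - s), gauge K (x - s')) = (d, d')) :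
      (0 < d ∧ d⁻¹ • (x - s) ∈ frontier K ∩ V) ∧ (0 < d' ∧ d'⁻¹ • (x - s') ∈ frontier K ∩ V) := by
    obtain ⟨hxX, hxd⟩ := Finset.mem_filter.1 hx
    obtain ⟨rfl, rfl⟩ := Prod.mk.inj hxd
    exact ⟨(hX x hxX s hball).2, (hX x hxX s' hball').2⟩
  obtain ⟨x, hx⟩ := Finset.card_pos.1 (pos_of_gt hfiber)
  exact ⟨d, (hmem hx).1.1, d', (hmem hx).2.1, _, hfiber, fun y hy => ⟨(hmem hy).1.2, (hmem hy).2.2⟩⟩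

lemma nontrivial_of_forall_exists_dist_le [Nontrivial E] {b : ℝ}
    (hS : ∀ z, ∃ s ∈ S, dist z s ≤ b) : S.Nontrivial := by
  obtain ⟨z, hz⟩ := NormedSpace.exists_lt_norm ℝ E (b + b)
  obtain ⟨s, hs, hzs⟩ := hS z
  obtain ⟨s', hs', h0s'⟩ := hS 0
  refine ⟨s, hs, s', hs', ?_⟩
  rintro rfl
  rw [← dist_zero_right] at hz
  exact hz.not_ge ((dist_triangle_right _ _ _).trans (add_le_add hzs h0s'))

theorem not_isHomothetyRigid_frontier_inter [Nontrivial E] {b c : ℝ} (hK : Convex ℝ K)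
    (h0 : K ∈ 𝓝 0) (hS : ∀ z, ∃ s ∈ S, dist z s ≤ b) (hc : 0 < c)
    (hsep : (gaugeDistSet K S).Pairwise fun d d' => c ≤ |d - d'|)
    (hV : IsOpen V) (hinf : (frontier K ∩ V).Infinite) :
    ¬ IsHomothetyRigid (frontier K ∩ V) := by
  classical
  intro hrigid
  obtain ⟨s, hs, s', hs', hne⟩ := nontrivial_of_forall_exists_dist_le hS
  obtain ⟨d, hd, d', hd', X, hXcard, hX⟩ :=
    exists_two_lt_card_inv_smul_sub_mem_frontier_inter hK h0 hS hc hsep hV hinf hs hs'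
  have hinj : Function.Injective fun x : E => d⁻¹ • (x - s) :=
    (smul_right_injective E (inv_ne_zero hd.ne')).comp sub_left_injective
  have hw : d'⁻¹ • (s - s') ≠ 0 := smul_ne_zero (inv_ne_zero hd'.ne') (sub_ne_zero.2 hne)
  have hcard := hrigid (div_pos hd hd') hw (X.image fun x => d⁻¹ • (x - s)) <|
    Finset.forall_mem_image.2 fun x hx => by
      have hhomothety : (d / d') • d⁻¹ • (x - s) + d'⁻¹ • (s - s') = d'⁻¹ • (x - s') := by
        rw [smul_smul, div_mul_eq_mul_div, mul_inv_cancel₀ hd.ne', one_div, ← smul_add,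
          sub_add_sub_cancel]
      exact hhomothety ▸ hX x hx
  rw [Finset.card_image_of_injective _ hinj] at hcard
  exact hcard.not_gt hXcard

end Pigeonhole

theorem stmt_10_general {E : Type*} [NormedAddCommGroup E] [NormedSpace ℝ E] {K S U : Set E}
    {b c : ℝ} (hE : finrank ℝ E = 2) (hK : Convex ℝ K) (h0 : K ∈ 𝓝 0)
    (hS : ∀ z, ∃ s ∈ S, dist z s ≤ b) (hc : 0 < c)
    (hsep : (gaugeDistSet K S).Pairwise fun d d' => c ≤ |d - d'|)
    (hU : IsOpen U) (hKU : (frontier K ∩ U).Nonempty) :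
    ∃ A B, A ≠ B ∧ segment ℝ A B ⊆ frontier K ∩ U := by
  by_contra! hseg
  have : Nontrivial E := nontrivial_of_finrank_eq_succ hE
  obtain ⟨p, hp, hpU⟩ := hKU
  obtain ⟨V, hV, hpV, hrigid⟩ :=
    exists_isHomothetyRigid_frontier_inter hE hK h0 hp (hU.mem_nhds hpU)
      fun A B h => by_contra fun hAB => hseg A B hAB h
  exact not_isHomothetyRigid_frontier_inter hK h0 hS hc hsep hV
    (infinite_frontier_inter hE hK h0 hp (hV.mem_nhds hpV)) hrigid

lemma mem_nhds_zero_of_convex_of_eq_neg {E : Type*} [AddCommGroup E] [Module ℝ E]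
    [TopologicalSpace E] [IsTopologicalAddGroup E] [ContinuousSMul ℝ E] {K : Set E}
    (hK : Convex ℝ K) (hsym : K = -K) (hint : (interior K).Nonempty) : K ∈ 𝓝 0 := by
  obtain ⟨z, hz⟩ := hint
  have hz' : -z ∈ interior K := by
    rw [hsym] at hz
    exact ((Homeomorph.neg E).preimage_interior K).superset hz
  exact mem_interior_iff_mem_nhds.1 <| by
    simpa using hK.interior.midpoint_mem hz hz'

lemma exists_pos_smul_mem_frontier {E : Type*} [NormedAddCommGroup E] [NormedSpace ℝ E] {K : Set E}
    (hK : Convex ℝ K) (hb : Bornology.IsBounded K) (h0 : K ∈ 𝓝 0) {x : E} (hx : x ≠ 0) :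
    ∃ r > (0 : ℝ), r • x ∈ frontier K := by
  have hpos : 0 < gauge K x :=
    (gauge_pos (absorbent_nhds_zero h0) (NormedSpace.isVonNBounded_of_isBounded ℝ hb)).2 hx
  exact ⟨(gauge K x)⁻¹, inv_pos.2 hpos, inv_gauge_smul_mem_frontier hK h0 hpos⟩

/-- The open angular sector `{r e^{iθ} : θ₁ < θ < θ₂, r > 0}`. The angle `θ` ranges over the reals,
so that the sector is a full punctured plane once `θ₂ - θ₁ > 2π`. -/
def openSector (θ₁ θ₂ : ℝ) : Set ℂ :=
  {z : ℂ | ∃ r θ : ℝ, 0 < r ∧ θ₁ < θ ∧ θ < θ₂ ∧ z = r * Complex.exp (θ * Complex.I)}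

lemma openSector_eq_image_exp (θ₁ θ₂ : ℝ) :
    openSector θ₁ θ₂ = Complex.exp '' (Complex.im ⁻¹' Ioo θ₁ θ₂) := by
  ext z
  constructor
  · rintro ⟨r, θ, hr, h₁, h₂, rfl⟩
    refine ⟨Real.log r + θ * Complex.I, by simp [h₁, h₂], ?_⟩
    rw [Complex.exp_add, ← Complex.ofReal_exp, Real.exp_log hr]
  · rintro ⟨w, ⟨h₁, h₂⟩, rfl⟩
    refine ⟨Real.exp w.re, w.im, Real.exp_pos _, h₁, h₂, ?_⟩
    rw [Complex.ofReal_exp, ← Complex.exp_add, Complex.re_add_im]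

lemma isOpen_openSector (θ₁ θ₂ : ℝ) : IsOpen (openSector θ₁ θ₂) := by
  rw [openSector_eq_image_exp]
  exact Complex.isOpenMap_exp _ (isOpen_Ioo.preimage Complex.continuous_im)

lemma frontier_inter_openSector_nonempty {K : Set ℂ} {θ₁ θ₂ : ℝ} (hK : Convex ℝ K)
    (hb : Bornology.IsBounded K) (h0 : K ∈ 𝓝 0) (hθ : θ₁ < θ₂) :
    (frontier K ∩ openSector θ₁ θ₂).Nonempty := by
  obtain ⟨θ, h₁, h₂⟩ := exists_between hθ
  obtain ⟨r, hr, hrK⟩ :=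
    exists_pos_smul_mem_frontier hK hb h0 (Complex.exp_ne_zero (θ * Complex.I))
  exact ⟨_, hrK, r, θ, hr, h₁, h₂, Complex.real_smul⟩

lemma exists_dist_le_two_of_forall_exists_mem_Icc {S : Set ℂ}
    (hS : ∀ a b : ℝ, ∃ s ∈ S, s.re ∈ Icc a (a + 1) ∧ s.im ∈ Icc b (b + 1)) (z : ℂ) :
    ∃ s ∈ S, dist z s ≤ 2 := by
  obtain ⟨s, hs, hre, him⟩ := hS z.re z.im
  refine ⟨s, hs, ?_⟩
  calc dist z s = ‖s - z‖ := by rw [dist_comm, dist_eq_norm]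
    _ ≤ |s.re - z.re| + |s.im - z.im| := Complex.norm_le_abs_re_add_abs_im _
    _ ≤ 1 + 1 := add_le_add (abs_le.2 ⟨by linarith [hre.1], by linarith [hre.2]⟩)
      (abs_le.2 ⟨by linarith [him.1], by linarith [him.2]⟩)
    _ = 2 := one_add_one_eq_two

/-- Lemma 1.1: if `K ⊆ ℝ² ≅ ℂ` is a bounded symmetric convex body, `S` is
well-distributed with constant 1, and the `K`-distance set of `S` is
separated, then for any angles `θ₁ < θ₂` the boundary of `K` intersected with
the open cone `{r e^{iθ} : θ₁ < θ < θ₂, r > 0}` contains a line segment. -/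
theorem stmt_10 (K : Set ℂ) (hK : Convex ℝ K) (hb : Bornology.IsBounded K)
    (hsym : K = -K) (hint : (interior K).Nonempty)
    (S : Set ℂ)
    (hWD : ∀ a b : ℝ, ∃ s ∈ S, s.re ∈ Icc a (a + 1) ∧ s.im ∈ Icc b (b + 1))
    (hsep : ∃ c > 0, ∀ x ∈ S, ∀ y ∈ S, ∀ x' ∈ S, ∀ y' ∈ S,
      gauge K (x - y) ≠ gauge K (x' - y') →
      c ≤ |gauge K (x - y) - gauge K (x' - y')|)
    (θ₁ θ₂ : ℝ) (hθ : θ₁ < θ₂) :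
    ∃ A B : ℂ, A ≠ B ∧ segment ℝ A B ⊆ frontier K ∩
      {z : ℂ | ∃ r θ : ℝ, 0 < r ∧ θ₁ < θ ∧ θ < θ₂ ∧
        z = r * Complex.exp (θ * Complex.I)} := by
  obtain ⟨c, hc, hsep⟩ := hsep
  have h0 : K ∈ 𝓝 0 := mem_nhds_zero_of_convex_of_eq_neg hK hsym hint
  exact stmt_10_general Complex.finrank_real_complex hK h0
    (exists_dist_le_two_of_forall_exists_mem_Icc hWD) hc (pairwise_gaugeDistSet_iff.2 hsep)
    (isOpen_openSector θ₁ θ₂) (frontier_inter_openSector_nonempty hK hb h0 hθ)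
end

section
/- Let K ⊂ ℝ² be a bounded, symmetric convex body and S ⊂ ℝ² a well-distributed set. If the distance set Δ_K(S) is separated, then K is a polygon with finitely many sides. -/
open Set

/-!
Let `L` be the derivative of `f = gauge K` at a smooth point `u` with `0 < f u`. For `x y ∈ S`
and a point `z ∈ S` at bounded distance from `x + (R / f u) • u`, the distances `f (z - x)` and
`f (z - y)` both lie in a window of bounded length around `R`, and their difference tends to
`L (y - x)` as `R → ∞`. By separation such a window contains a bounded number of distances,
uniformly in `R`, so `L (y - x)` takes finitely many values as `u` varies. Since `S - S` spans the
space, there are only finitely many derivatives `L`. By Rademacher's theorem smooth points are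
dense, hence `K` is the intersection of the finitely many half-spaces `{w | L w ≤ 1}`.
-/

open Filter Topology
open scoped NNReal

section Polytope

variable {ι E : Type*} [Finite ι] [AddCommGroup E] [Module ℝ E] {L : ι → E →ₗ[ℝ] ℝ} {b : ι → ℝ}

lemma eventually_sub_smul_mem_halfspaces {u v : E} (hu : ∀ i, L i u ≤ b i)
    (huv : ∀ i, L i u = b i → L i v = b i) :
    ∀ᶠ t : ℝ in 𝓝[>] 0, ∀ i, L i (u - t • (v - u)) ≤ b i := by
  refine eventually_all.2 fun i => ?_
  simp only [map_sub, map_smul, smul_eq_mul]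
  by_cases hi : L i u = b i
  · exact .of_forall fun t => by simp [huv i hi, hi]
  · have hcont : Continuous fun t : ℝ => L i u - t * (L i v - L i u) := by fun_prop
    have hlt : L i u - 0 * (L i v - L i u) < b i := by
      simpa using lt_of_le_of_ne (hu i) hi
    exact ((hcont.tendsto 0).eventually_lt_const hlt).filter_mono nhdsWithin_le_nhds
      |>.mono fun _ => le_of_lt

lemma eq_of_mem_extremePoints_halfspaces {u v : E}
    (hu : u ∈ {x | ∀ i, L i x ≤ b i}.extremePoints ℝ) (hv : ∀ i, L i v ≤ b i)
    (huv : ∀ i, L i u = b i → L i v = b i) : u = v := by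
  obtain ⟨t, hmem, ht⟩ := ((eventually_sub_smul_mem_halfspaces hu.1 huv).and
    self_mem_nhdsWithin).exists
  have ht : 0 < t := ht
  have hseg : u ∈ openSegment ℝ (u - t • (v - u)) v := by
    refine ⟨1 / (1 + t), t / (1 + t), by positivity, by positivity, by field_simp, ?_⟩
    match_scalars <;> field_simp <;> ring
  have htriv : t • (v - u) = 0 := sub_eq_self.1 (hu.2 hmem hv hseg)
  exact (sub_eq_zero.1 ((smul_eq_zero.1 htriv).resolve_left ht.ne')).symm

lemma finite_extremePoints_halfspaces : ({x | ∀ i, L i x ≤ b i}.extremePoints ℝ).Finite := by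
  have hinj : InjOn (fun u => {i | L i u = b i}) ({x | ∀ i, L i x ≤ b i}.extremePoints ℝ) :=
    fun _ hu _ hv huv => eq_of_mem_extremePoints_halfspaces hu hv.1 fun _ hi => huv.le hi
  exact Finite.of_finite_image (toFinite _) hinj

theorem exists_finset_halfspaces_eq_convexHull [TopologicalSpace E] [T2Space E]
    [IsTopologicalAddGroup E] [ContinuousSMul ℝ E] [LocallyConvexSpace ℝ E]
    (hcomp : IsCompact {x | ∀ i, L i x ≤ b i}) :
    ∃ F : Finset E, {x | ∀ i, L i x ≤ b i} = convexHull ℝ (F : Set E) := by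
  have hconv : Convex ℝ {x | ∀ i, L i x ≤ b i} := by
    rw [ofPred_forall]
    exact convex_iInter fun i => convex_halfSpace_le (L i).isLinear (b i)
  have hfin := finite_extremePoints_halfspaces (L := L) (b := b)
  refine ⟨hfin.toFinset, ?_⟩
  rw [hfin.coe_toFinset, ← (hfin.isClosed_convexHull ℝ).closure_eq,
    closure_convexHull_extremePoints hcomp hconv]

end Polytope

section Finiteness

lemma finite_of_forall_finset_near_card_le {α : Type*} [MetricSpace α] {A : Set α} {n : ℕ}
    (h : ∀ T : Finset α, ↑T ⊆ A → ∀ ε > 0, ∃ P : Finset α, P.card ≤ n ∧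
      ∀ t ∈ T, ∃ p ∈ P, dist t p < ε) : A.Finite := by
  by_contra hA
  obtain ⟨T, hTA, hTcard⟩ := Set.Infinite.exists_subset_card_eq hA (n + 2)
  have hsep : 0 < (T : Set α).infsep :=
    T.infsep_pos_iff_nontrivial.2 (Finset.one_lt_card_iff_nontrivial.1 (by lia))
  obtain ⟨P, hPcard, hnear⟩ := h T hTA _ (half_pos hsep)
  choose! p hpP hp using hnear
  obtain ⟨s, hs, t, ht, hst, hpst⟩ :=
    Finset.exists_ne_map_eq_of_card_lt_of_maps_to (by lia : P.card < T.card) hpP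
  have hdist : dist s t < (T : Set α).infsep := calc
    dist s t ≤ dist s (p s) + dist t (p s) := dist_triangle_right _ _ _
    _ < (T : Set α).infsep / 2 + (T : Set α).infsep / 2 :=
      add_lt_add (hp s hs) (hpst ▸ hp t ht)
    _ = (T : Set α).infsep := add_halves _
  exact hdist.not_ge (infsep_le_dist_of_mem hs ht hst)

lemma exists_nat_forall_encard_inter_closedBall_le {D : Set ℝ} {c : ℝ} (hc : 0 < c)
    (hD : D.Pairwise fun s t => c ≤ |s - t|) (r : ℝ) :
    ∃ n : ℕ, ∀ a, (D ∩ Metric.closedBall a r).encard ≤ n := by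
  refine ⟨⌊2 * r / c⌋₊ + 1, fun a => ?_⟩
  let cell : ℝ → ℕ := fun s => ⌊(s - (a - r)) / c⌋₊
  have hmaps : MapsTo cell (D ∩ Metric.closedBall a r) (Finset.range (⌊2 * r / c⌋₊ + 1)) := by
    rintro s ⟨-, hs⟩
    rw [Real.closedBall_eq_Icc] at hs
    rw [Finset.coe_range, mem_Iio, Nat.lt_succ_iff]
    exact Nat.floor_le_floor (by gcongr; linarith [hs.2])
  have hinj : InjOn cell (D ∩ Metric.closedBall a r) := by
    rintro s ⟨hsD, hs⟩ t ⟨htD, ht⟩ hst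
    rw [Real.closedBall_eq_Icc] at hs ht
    by_contra hne
    have hfloor : ⌊(s - (a - r)) / c⌋ = ⌊(t - (a - r)) / c⌋ := by
      rw [← Int.natCast_floor_eq_floor (div_nonneg (by linarith [hs.1]) hc.le),
        ← Int.natCast_floor_eq_floor (div_nonneg (by linarith [ht.1]) hc.le)]
      exact congrArg _ hst
    have hlt := Int.abs_sub_lt_one_of_floor_eq_floor hfloor
    rw [← sub_div, sub_sub_sub_cancel_right, abs_div, abs_of_pos hc, div_lt_one hc] at hlt
    exact hlt.not_ge (hD hsD htD hne)
  simpa only [encard_coe_eq_coe_finsetCard, Finset.card_range] using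
    encard_le_encard_of_injOn hmaps hinj

lemma finite_of_finite_image_apply {R E F : Type*} [Semiring R] [AddCommMonoid E] [Module R E]
    [TopologicalSpace E] [AddCommMonoid F] [Module R F] [TopologicalSpace F] [Module.Finite R E]
    {V : Set E} (hV : Submodule.span R V = ⊤) {N : Set (E →L[R] F)}
    (hN : ∀ v ∈ V, ((fun L => L v) '' N).Finite) : N.Finite := by
  obtain ⟨B, hBV, hB⟩ := (Submodule.fg_span_iff_fg_span_finset_subset V).1
    (hV ▸ Module.Finite.fg_top)
  let eval : (E →L[R] F) → B → F := fun L v => L v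
  have hinj : Function.Injective eval := fun L M hLM =>
    ContinuousLinearMap.coe_injective <|
      LinearMap.ext_on (hB.symm.trans hV) fun v hv => congrFun hLM ⟨v, hv⟩
  have himage : (eval '' N).Finite := by
    refine (Finite.pi' fun v : B => hN v (hBV v.2)).subset ?_
    rintro _ ⟨L, hL, rfl⟩ v
    exact ⟨L, hL, rfl⟩
  exact Finite.of_finite_image himage hinj.injOn

end Finiteness

section RelativelyDense

variable {E : Type*} [NormedAddCommGroup E] [NormedSpace ℝ E]

lemma submodule_eq_top_of_forall_exists_dist_le [FiniteDimensional ℝ E] {W : Submodule ℝ E} {C : ℝ}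
    (hW : ∀ p, ∃ w ∈ W, dist w p ≤ C) : W = ⊤ := by
  refine eq_top_iff.2 fun p _ => ?_
  rw [← SetLike.mem_coe, ← W.closed_of_finiteDimensional.closure_eq, Metric.mem_closure_iff]
  intro ε hε
  -- Scaling `p` up by `t` shrinks its distance to `W` to `C / t`.
  obtain ⟨t, ht, hCt⟩ : ∃ t : ℝ, 0 < t ∧ C < t * ε :=
    ((eventually_gt_atTop 0).and ((tendsto_id.atTop_mul_const hε).eventually_gt_atTop C)).exists
  obtain ⟨w, hw, hwp⟩ := hW (t • p)
  refine ⟨t⁻¹ • w, W.smul_mem _ hw, ?_⟩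
  have hdist : dist w (t • p) = t * dist p (t⁻¹ • w) := by
    rw [dist_comm, ← Real.norm_of_nonneg ht.le, ← dist_smul₀, Real.norm_of_nonneg ht.le,
      smul_inv_smul₀ ht.ne']
  exact lt_of_mul_lt_mul_left (hdist ▸ hwp.trans_lt hCt) ht.le

open scoped Pointwise in
lemma span_sub_eq_top_of_forall_exists_dist_le [FiniteDimensional ℝ E] {S : Set E} {C : ℝ}
    (hS : ∀ p, ∃ s ∈ S, dist s p ≤ C) : Submodule.span ℝ (S - S) = ⊤ := by
  obtain ⟨x, hx, -⟩ := hS 0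
  refine submodule_eq_top_of_forall_exists_dist_le (C := C) fun p => ?_
  obtain ⟨s, hs, hsp⟩ := hS (p + x)
  exact ⟨s - x, Submodule.subset_span (sub_mem_sub hs hx), by
    rwa [dist_eq_norm, sub_sub, add_comm x p, ← dist_eq_norm]⟩

end RelativelyDense

/-- Positive homogeneity of degree one, the property of gauges behind the asymptotics of
`f (r • u + w)` as `r → ∞`. The factor `r = 0` is allowed, so `f 0 = 0`. -/
def PositivelyHomogeneous {E : Type*} [SMul ℝ E] (f : E → ℝ) : Prop :=
  ∀ ⦃r : ℝ⦄, 0 ≤ r → ∀ x, f (r • x) = r * f x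

/-- The derivatives of `f` at points where `f` is positive. For `f = gauge K`, these are the
functionals `L` for which `{w | L w = 1}` is the tangent hyperplane to `K` at a smooth boundary
point. -/
def tangentFunctionals {E : Type*} [NormedAddCommGroup E] [NormedSpace ℝ E] (f : E → ℝ) :
    Set (E →L[ℝ] ℝ) :=
  {L | ∃ u, 0 < f u ∧ HasFDerivAt f L u}

namespace PositivelyHomogeneous

variable {E : Type*} [NormedAddCommGroup E] [NormedSpace ℝ E] {f : E → ℝ} {L : E →L[ℝ] ℝ} {u : E}

lemma tendstoUniformlyOn_smul_add_sub (hf : PositivelyHomogeneous f) (hL : HasFDerivAt f L u)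
    (B : ℝ) : TendstoUniformlyOn (fun (r : ℝ) w => f (r • u + w) - r * f u) L atTop
      (Metric.closedBall 0 B) := by
  rw [Metric.tendstoUniformlyOn_iff]
  intro ε hε
  set η : ℝ := ε / (|B| + 1)
  have hη : 0 < η := by positivity
  obtain ⟨δ, hδ, hnear⟩ := Metric.eventually_nhds_iff.1
    ((hasFDerivAt_iff_isLittleO_nhds_zero.1 hL).def hη)
  filter_upwards [eventually_gt_atTop 0, eventually_gt_atTop (B / δ)] with r hr hrB w hw
  rw [mem_closedBall_zero_iff] at hw
  have hnorm : ‖r⁻¹ • w‖ = r⁻¹ * ‖w‖ := norm_smul_of_nonneg (inv_nonneg.2 hr.le) w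
  have hsmall : dist (r⁻¹ • w) 0 < δ := by
    rw [dist_zero_right, hnorm, inv_mul_lt_iff₀ hr]
    exact hw.trans_lt ((div_lt_iff₀ hδ).1 hrB)
  have hscale : f (r • u + w) - r * f u - L w = r * (f (u + r⁻¹ • w) - f u - L (r⁻¹ • w)) := by
    have hfactor : r • u + w = r • (u + r⁻¹ • w) := by rw [smul_add, smul_inv_smul₀ hr.ne']
    rw [hfactor, hf hr.le, map_smul, smul_eq_mul]
    field_simp
  calc dist (L w) (f (r • u + w) - r * f u)
      = r * ‖f (u + r⁻¹ • w) - f u - L (r⁻¹ • w)‖ := by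
        rw [dist_comm, Real.dist_eq, hscale, abs_mul, abs_of_pos hr, Real.norm_eq_abs]
    _ ≤ r * (η * ‖r⁻¹ • w‖) := by gcongr; exact hnear hsmall
    _ = η * ‖w‖ := by rw [hnorm]; field_simp
    _ < η * (|B| + 1) := by gcongr; linarith [le_abs_self B]
    _ = ε := by simp only [η]; field_simp

lemma tendsto_smul_add_sub (hf : PositivelyHomogeneous f) (hL : HasFDerivAt f L u) (w : E) :
    Tendsto (fun r : ℝ => f (r • u + w) - r * f u) atTop (𝓝 (L w)) :=
  (hf.tendstoUniformlyOn_smul_add_sub hL ‖w‖).tendsto_at (by simp)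

lemma apply_self_of_hasFDerivAt (hf : PositivelyHomogeneous f) (hL : HasFDerivAt f L u) :
    L u = f u := by
  refine tendsto_nhds_unique (hf.tendsto_smul_add_sub hL u) (tendsto_const_nhds.congr' ?_)
  filter_upwards [eventually_ge_atTop 0] with r hr
  have hcollect : r • u + u = (r + 1) • u := by module
  rw [hcollect, hf (by positivity)]
  ring

lemma apply_le_of_hasFDerivAt (hf : PositivelyHomogeneous f) (hadd : ∀ x y, f (x + y) ≤ f x + f y)
    (hL : HasFDerivAt f L u) (w : E) : L w ≤ f w := by
  refine le_of_tendsto (hf.tendsto_smul_add_sub hL w) ?_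
  filter_upwards [eventually_ge_atTop 0] with r hr
  linarith [hadd (r • u) w, hf hr u]

lemma eventually_exists_eq_forall_abs_sub_lt (hf : PositivelyHomogeneous f)
    (hL : L ∈ tangentFunctionals f) (B : ℝ) {ε : ℝ} (hε : 0 < ε) :
    ∀ᶠ R in atTop, ∃ p, f p = R ∧ ∀ w, ‖w‖ ≤ B → |f (p + w) - R - L w| < ε := by
  obtain ⟨u, hu, hLu⟩ := hL
  have hunif := Metric.tendstoUniformlyOn_iff.1 (hf.tendstoUniformlyOn_smul_add_sub hLu B) ε hε
  have hradius : Tendsto (fun R => R / f u) atTop atTop := tendsto_id.atTop_div_const hu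
  filter_upwards [hradius.eventually hunif, eventually_ge_atTop 0] with R hR hR0
  refine ⟨(R / f u) • u, ?_, fun w hw => ?_⟩
  · rw [hf (by positivity), div_mul_cancel₀ _ hu.ne']
  · simpa only [Real.dist_eq, abs_sub_comm (L w), div_mul_cancel₀ _ hu.ne'] using
      hR w (mem_closedBall_zero_iff.2 hw)

lemma eventually_exists_mem_closedBall_abs_sub_sub_lt (hf : PositivelyHomogeneous f) {A : ℝ≥0}
    (hlip : LipschitzWith A f) {S : Set E} {C : ℝ} (hS : ∀ p, ∃ s ∈ S, dist s p ≤ C) (x y : E)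
    (hL : L ∈ tangentFunctionals f) {ε : ℝ} (hε : 0 < ε) :
    ∀ᶠ R in atTop, ∃ z ∈ S,
      f (z - x) ∈ Metric.closedBall R (A * (C + ‖y - x‖)) ∧
      f (z - y) ∈ Metric.closedBall R (A * (C + ‖y - x‖)) ∧
      |f (z - x) - f (z - y) - L (y - x)| < ε := by
  filter_upwards [hf.eventually_exists_eq_forall_abs_sub_lt hL (C + ‖y - x‖) (half_pos hε)]
    with R ⟨p, hp, hasymp⟩
  have hwindow : ∀ w, ‖w‖ ≤ C + ‖y - x‖ →
      f (p + w) ∈ Metric.closedBall R (A * (C + ‖y - x‖)) := fun w hw => by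
    rw [Metric.mem_closedBall, ← hp]
    calc dist (f (p + w)) (f p) ≤ A * dist (p + w) p := hlip.dist_le_mul _ _
      _ ≤ A * (C + ‖y - x‖) := by rw [dist_self_add_left]; gcongr
  obtain ⟨z, hzS, hz⟩ := hS (x + p)
  rw [dist_eq_norm] at hz
  set w := z - (x + p)
  have hzx : z - x = p + w := by simp only [w]; abel
  have hzy : z - y = p + (w - (y - x)) := by simp only [w]; abel
  have hw : ‖w‖ ≤ C + ‖y - x‖ := by linarith [norm_nonneg (y - x)]
  have hw' : ‖w - (y - x)‖ ≤ C + ‖y - x‖ := (norm_sub_le _ _).trans (by gcongr)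
  refine ⟨z, hzS, hzx ▸ hwindow w hw, hzy ▸ hwindow _ hw', ?_⟩
  rw [hzx, hzy]
  calc |f (p + w) - f (p + (w - (y - x))) - L (y - x)|
      = |(f (p + w) - R - L w) - (f (p + (w - (y - x))) - R - L (w - (y - x)))| := by
        rw [map_sub L w]; ring_nf
    _ ≤ |f (p + w) - R - L w| + |f (p + (w - (y - x))) - R - L (w - (y - x))| := abs_sub _ _
    _ < ε / 2 + ε / 2 := add_lt_add (hasymp w hw) (hasymp _ hw')
    _ = ε := add_halves ε

open scoped Pointwise in
theorem finite_image_apply_tangentFunctionals (hf : PositivelyHomogeneous f) {A : ℝ≥0}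
    (hlip : LipschitzWith A f) {S : Set E} {C : ℝ} (hS : ∀ p, ∃ s ∈ S, dist s p ≤ C) {c : ℝ}
    (hc : 0 < c) (hsep : (f '' (S - S)).Pairwise fun s t => c ≤ |s - t|) {v : E}
    (hv : v ∈ S - S) : ((fun L => L v) '' tangentFunctionals f).Finite := by
  classical
  obtain ⟨y, hy, x, hx, rfl⟩ := hv
  obtain ⟨n, hn⟩ :=
    exists_nat_forall_encard_inter_closedBall_le hc hsep (A * (C + ‖y - x‖))
  refine finite_of_forall_finset_near_card_le (n := n * n) fun T hT ε hε => ?_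
  have hlarge : ∀ᶠ R in atTop, ∀ t ∈ T, ∃ z ∈ S,
      f (z - x) ∈ Metric.closedBall R (A * (C + ‖y - x‖)) ∧
      f (z - y) ∈ Metric.closedBall R (A * (C + ‖y - x‖)) ∧
      |f (z - x) - f (z - y) - t| < ε := by
    refine (eventually_all_finset T).2 fun t ht => ?_
    obtain ⟨L, hL, rfl⟩ := hT ht
    exact hf.eventually_exists_mem_closedBall_abs_sub_sub_lt hlip hS x y hL hε
  obtain ⟨R, hR⟩ := hlarge.exists
  obtain ⟨W, hW⟩ := (finite_of_encard_le_coe (hn R)).exists_finset_coe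
  have hWcard : W.card ≤ n := by
    have hle := hn R
    rw [← hW, encard_coe_eq_coe_finsetCard] at hle
    exact_mod_cast hle
  refine ⟨W - W, Finset.card_sub_le.trans (Nat.mul_le_mul hWcard hWcard), fun t ht => ?_⟩
  obtain ⟨z, hz, hzx, hzy, hnear⟩ := hR t ht
  have hmem : ∀ q ∈ S, f (z - q) ∈ Metric.closedBall R (A * (C + ‖y - x‖)) → f (z - q) ∈ W :=
    fun q hq hball => Finset.mem_coe.1 (hW ▸ ⟨mem_image_of_mem f (sub_mem_sub hz hq), hball⟩)
  refine ⟨_, Finset.sub_mem_sub (hmem x hx hzx) (hmem y hy hzy), ?_⟩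
  rwa [dist_comm, Real.dist_eq]

variable [FiniteDimensional ℝ E]

open scoped Pointwise in
theorem finite_tangentFunctionals (hf : PositivelyHomogeneous f) {A : ℝ≥0}
    (hlip : LipschitzWith A f) {S : Set E} {C : ℝ} (hS : ∀ p, ∃ s ∈ S, dist s p ≤ C) {c : ℝ}
    (hc : 0 < c) (hsep : (f '' (S - S)).Pairwise fun s t => c ≤ |s - t|) :
    (tangentFunctionals f).Finite :=
  finite_of_finite_image_apply (span_sub_eq_top_of_forall_exists_dist_le hS) fun _ hv =>
    hf.finite_image_apply_tangentFunctionals hlip hS hc hsep hv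

lemma exists_tangentFunctional_apply_eq (hf : PositivelyHomogeneous f) {A : ℝ≥0}
    (hlip : LipschitzWith A f) (hfin : (tangentFunctionals f).Finite) {w : E} (hw : 0 < f w) :
    ∃ L ∈ tangentFunctionals f, L w = f w := by
  borelize E
  have hdense : Dense {u | DifferentiableAt ℝ f u} :=
    MeasureTheory.Measure.dense_of_ae
      (hlip.ae_differentiableAt (μ := MeasureTheory.Measure.addHaar))
  have hclosed : IsClosed (⋃ L ∈ tangentFunctionals f, {u | L u = f u}) :=
    hfin.isClosed_biUnion fun L _ => isClosed_eq L.continuous hlip.continuous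
  have hsub : {u | 0 < f u} ∩ {u | DifferentiableAt ℝ f u} ⊆
      ⋃ L ∈ tangentFunctionals f, {u | L u = f u} := fun u ⟨hu, hdiff⟩ =>
    mem_biUnion (show fderiv ℝ f u ∈ tangentFunctionals f from ⟨u, hu, hdiff.hasFDerivAt⟩)
      (hf.apply_self_of_hasFDerivAt hdiff.hasFDerivAt)
  have hopen : IsOpen {u | 0 < f u} := isOpen_lt continuous_const hlip.continuous
  have hmem := hclosed.closure_subset_iff.2 hsub (hdense.open_subset_closure_inter hopen hw)
  simpa only [mem_iUnion, exists_prop, mem_ofPred_eq] using hmem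

lemma setOf_le_one_eq_halfspaces (hf : PositivelyHomogeneous f)
    (hadd : ∀ x y, f (x + y) ≤ f x + f y) {A : ℝ≥0} (hlip : LipschitzWith A f)
    (hfin : (tangentFunctionals f).Finite) :
    {w | f w ≤ 1} = {w | ∀ L ∈ tangentFunctionals f, L w ≤ 1} := by
  ext w
  refine ⟨fun hw L ⟨u, _, hL⟩ => (hf.apply_le_of_hasFDerivAt hadd hL w).trans hw, fun hw => ?_⟩
  by_contra hle
  have hlt : 1 < f w := not_le.1 hle
  obtain ⟨L, hL, hLw⟩ := hf.exists_tangentFunctional_apply_eq hlip hfin (zero_lt_one.trans hlt)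
  exact hle (hLw.symm.trans_le (hw L hL))

end PositivelyHomogeneous

lemma positivelyHomogeneous_gauge {E : Type*} [AddCommGroup E] [Module ℝ E] (K : Set E) :
    PositivelyHomogeneous (gauge K) :=
  fun r hr x => by rw [gauge_smul_of_nonneg hr, smul_eq_mul]

lemma mem_nhds_zero_of_eq_neg {E : Type*} [AddCommGroup E] [Module ℝ E] [TopologicalSpace E]
    [IsTopologicalAddGroup E] [ContinuousConstSMul ℝ E] {K : Set E} (hK : Convex ℝ K)
    (hsym : K = -K) (hint : (interior K).Nonempty) : K ∈ 𝓝 0 := by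
  obtain ⟨p, hp⟩ := hint
  have hneg : -p ∈ K := by
    rw [hsym]
    exact neg_mem_neg.2 (interior_subset hp)
  refine mem_interior_iff_mem_nhds.1 (hK.openSegment_interior_self_subset_interior hp hneg ?_)
  exact ⟨1 / 2, 1 / 2, by norm_num, by norm_num, by norm_num, by simp⟩

lemma exists_dist_le_of_forall_square {S : Set (ℝ × ℝ)} {C : ℝ}
    (hS : ∀ a b : ℝ, ∃ s ∈ S, s.1 ∈ Icc a (a + C) ∧ s.2 ∈ Icc b (b + C)) (p : ℝ × ℝ) :
    ∃ s ∈ S, dist s p ≤ C := by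
  obtain ⟨s, hs, h1, h2⟩ := hS p.1 p.2
  refine ⟨s, hs, max_le ?_ ?_⟩
  · rw [Real.dist_eq, abs_of_nonneg (by linarith [h1.1])]
    linarith [h1.2]
  · rw [Real.dist_eq, abs_of_nonneg (by linarith [h2.1])]
    linarith [h2.2]

open scoped Pointwise in
theorem stmt_12_general {E : Type*} [NormedAddCommGroup E] [NormedSpace ℝ E]
    [FiniteDimensional ℝ E] {K : Set E} (hK : Convex ℝ K) (hcomp : IsCompact K) (h0 : K ∈ 𝓝 0)
    {S : Set E} (hS : ∃ C, ∀ p, ∃ s ∈ S, dist s p ≤ C)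
    (hsep : ∃ c > 0, ∀ x ∈ S, ∀ y ∈ S, ∀ x' ∈ S, ∀ y' ∈ S,
      gauge K (x - y) ≠ gauge K (x' - y') →
      c ≤ |gauge K (x - y) - gauge K (x' - y')|) :
    ∃ F : Finset E, K = convexHull ℝ (F : Set E) := by
  obtain ⟨C, hS⟩ := hS
  obtain ⟨c, hc, hsep⟩ := hsep
  obtain ⟨A, hlip⟩ := hK.lipschitz_gauge h0
  have hhom := positivelyHomogeneous_gauge K
  have hpairwise : (gauge K '' (S - S)).Pairwise fun s t => c ≤ |s - t| := by
    rintro _ ⟨_, ⟨x, hx, y, hy, rfl⟩, rfl⟩ _ ⟨_, ⟨x', hx', y', hy', rfl⟩, rfl⟩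
    exact hsep x hx y hy x' hx' y' hy'
  have hfin := hhom.finite_tangentFunctionals hlip hS hc hpairwise
  have hunitBall : K = {w | gauge K w ≤ 1} := by
    ext w
    rw [mem_ofPred_eq, gauge_le_one_iff_mem_closure hK h0, hcomp.isClosed.closure_eq]
  have hhalfspaces : K =
      {w | ∀ L : tangentFunctionals (gauge K), (L : E →L[ℝ] ℝ).toLinearMap w ≤ 1} := by
    simpa using hunitBall.trans (hhom.setOf_le_one_eq_halfspaces
      (gauge_add_le hK (absorbent_nhds_zero h0)) hlip hfin)
  have := hfin.to_subtype
  rw [hhalfspaces] at hcomp ⊢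
  exact exists_finset_halfspaces_eq_convexHull hcomp

/-- Theorem 0.1: if `K ⊆ ℝ²` is a compact symmetric convex body, `S ⊆ ℝ²` is
well-distributed, and the `K`-distance set `Δ_K(S)` is separated, then `K` is
a polygon with finitely many sides (the convex hull of a finite set). -/
theorem stmt_12 (K : Set (ℝ × ℝ)) (hK : Convex ℝ K) (hcomp : IsCompact K)
    (hsym : K = -K) (hint : (interior K).Nonempty)
    (S : Set (ℝ × ℝ))
    (hWD : ∃ C > 0, ∀ a b : ℝ, ∃ s ∈ S, s.1 ∈ Icc a (a + C) ∧ s.2 ∈ Icc b (b + C))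
    (hsep : ∃ c > 0, ∀ x ∈ S, ∀ y ∈ S, ∀ x' ∈ S, ∀ y' ∈ S,
      gauge K (x - y) ≠ gauge K (x' - y') →
      c ≤ |gauge K (x - y) - gauge K (x' - y')|) :
    ∃ F : Finset (ℝ × ℝ), K = convexHull ℝ (F : Set (ℝ × ℝ)) :=
  stmt_12_general hK hcomp (mem_nhds_zero_of_eq_neg hK hsym hint)
    (hWD.imp fun _ hC => exists_dist_le_of_forall_square hC.2) hsep
end
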